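/- There are, up to isomorphism, exactly four (2)-pancyclic graphs on 11 vertices with at most 16 edges. -/

import Mathlib

open SimpleGraph

/-- The number of cycles of length `k` in `G`, counted as subgraphs of `G`
isomorphic to the cycle graph `C_k`. -/
noncomputable def cycleCount {V : Type*} (G : SimpleGraph V) (k : ℕ) : ℕ :=
  {H : G.Subgraph | Nonempty (H.coe ≃g cycleGraph k)}.ncard

/-- A graph on `v ≥ 3` vertices is `(r)`-pancyclic if it contains precisely `r`
cycles of every length from `3` to `v`. -/
def IsRPancyclic {V : Type*} [Fintype V] (G : SimpleGraph V) (r : ℕ) : Prop :=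
  3 ≤ Fintype.card V ∧
    ∀ k : ℕ, 3 ≤ k → k ≤ Fintype.card V → cycleCount G k = r

/-- There are, up to isomorphism, exactly `N` graphs on `v` vertices with at most
`b` edges satisfying the given pancyclicity property with parameter `r`. -/
def ExactlyNUpToIso (r N v b : ℕ) : Prop :=
  ∃ Gs : Fin N → SimpleGraph (Fin v),
    (∀ i j : Fin N, i ≠ j → IsEmpty (Gs i ≃g Gs j)) ∧
    (∀ i : Fin N, IsRPancyclic (Gs i) r ∧ (Gs i).edgeSet.ncard ≤ b) ∧
    (∀ (W : Type) [Fintype W] (G : SimpleGraph W), Fintype.card W = v →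
      G.edgeSet.ncard ≤ b → IsRPancyclic G r → ∃ i : Fin N, Nonempty (G ≃g Gs i))

/-!
The cycles through a new edge `ab` correspond to the paths from `a` to `b` that were there before.
Hence cycle counts can be updated edge by edge, and since they never decrease, a search over edge
sets may be cut off as soon as one count exceeds 2.

A (2)-pancyclic graph of order 11 has a Hamiltonian cycle, and a further edge, since the cycle alone
contains no triangle. Rotating a shortest such chord to `{0, d}` leaves `2 ≤ d ≤ 5`, with all chords
at cyclic distance at least `d`. The search over these chords succeeds for eight chord sets, all
with `d = 2`. They come in pairs exchanged by the reflection `x ↦ 2 - x`, and the resulting four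
graphs differ in the number of edges between vertices of degrees 3 and 4.
-/

/-! ### Cycles and their edge sets -/

section CycleEdgeSets

variable {V W : Type*} {G : SimpleGraph V} {n : ℕ}

/-- The edge sets of the cycles of length `k` in `G`, a cycle being a closed walk here. -/
def cycleEdgeSets (G : SimpleGraph V) (k : ℕ) : Set (Set (Sym2 V)) :=
  {E | ∃ (u : V) (c : G.Walk u u), c.IsCycle ∧ c.length = k ∧ c.edgeSet = E}

theorem ncard_edgeSet_of_isTrail {u v : V} {p : G.Walk u v} (hp : p.IsTrail) :
    p.edgeSet.ncard = p.length := by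
  classical
  rw [← p.length_edges, ← List.toFinset_card_of_nodup hp.edges_nodup, ← Set.ncard_coe_finset,
    List.coe_toFinset]
  rfl

theorem ncard_edgeSet_of_iso_cycleGraph {H : G.Subgraph} (e : H.coe ≃g cycleGraph (n + 3)) :
    H.edgeSet.ncard = n + 3 := by
  have hcard : (cycleGraph (n + 3)).edgeSet.ncard = n + 3 := by
    have := (cycleGraph (n + 3)).sum_degrees_eq_twice_card_edges
    simp only [cycleGraph_degree_three_le, Finset.sum_const, Finset.card_univ, Fintype.card_fin,
      smul_eq_mul] at this
    rw [← coe_edgeFinset, Set.ncard_coe_finset]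
    lia
  rw [← H.image_coe_edgeSet_coe,
    Set.ncard_image_of_injective _ (Sym2.map.injective Subtype.val_injective),
    ← hcard]
  exact Set.ncard_congr' e.mapEdgeSet

theorem injOn_edgeSet_of_iso_cycleGraph (G : SimpleGraph V) (n : ℕ) :
    Set.InjOn Subgraph.edgeSet {H : G.Subgraph | Nonempty (H.coe ≃g cycleGraph (n + 3))} := by
  have verts_eq {H : G.Subgraph} (e : H.coe ≃g cycleGraph (n + 3)) :
      H.verts = {v | ∃ x ∈ H.edgeSet, v ∈ x} := by
    ext v
    refine ⟨fun hv ↦ ?_, fun ⟨x, hx, hv⟩ ↦ H.mem_verts_of_mem_edge hx hv⟩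
    have hadj : (cycleGraph (n + 3)).Adj (e ⟨v, hv⟩) (e ⟨v, hv⟩ + 1) := by simp [cycleGraph_adj]
    rw [← e.apply_symm_apply (e ⟨v, hv⟩ + 1), e.map_adj_iff] at hadj
    exact ⟨s(v, _), hadj, Sym2.mem_mk_left _ _⟩
  rintro H ⟨e⟩ H' ⟨e'⟩ h
  refine Subgraph.ext (by rw [verts_eq e, verts_eq e', h]) ?_
  ext u v
  rw [← Subgraph.mem_edgeSet, h, Subgraph.mem_edgeSet]

theorem edgeSet_mem_cycleEdgeSets_of_iso {H : G.Subgraph} (e : H.coe ≃g cycleGraph (n + 3)) :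
    H.edgeSet ∈ cycleEdgeSets G (n + 3) := by
  obtain ⟨u, p, hp, hlen⟩ := (cycleGraph_isContained_iff (by lia)).mp ⟨e.symm.toCopy⟩
  have hc : (p.map H.hom).IsCycle := hp.map H.hom_injective
  refine ⟨_, p.map H.hom, hc, by rw [Walk.length_map, hlen], ?_⟩
  refine Set.eq_of_subset_of_ncard_le ?_ ?_ (Set.finite_of_ncard_ne_zero ?_)
  · rw [← H.image_coe_edgeSet_coe, Walk.edgeSet_map]
    exact Set.image_mono fun e he ↦ p.edges_subset_edgeSet he
  · rw [ncard_edgeSet_of_isTrail hc.isTrail, ncard_edgeSet_of_iso_cycleGraph e,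
      Walk.length_map, hlen]
  · simp [ncard_edgeSet_of_iso_cycleGraph e]

theorem exists_subgraph_edgeSet_eq_of_isCycle {u : V} {c : G.Walk u u} (hc : c.IsCycle)
    (hlen : c.length = n + 3) :
    ∃ H : G.Subgraph, Nonempty (H.coe ≃g cycleGraph (n + 3)) ∧ H.edgeSet = c.edgeSet := by
  have hle : fromEdgeSet c.edgeSet ≤ G := by
    rw [fromEdgeSet_le]
    exact fun e he ↦ c.edges_subset_edgeSet he.1
  have hc' : ∀ e ∈ c.edges, e ∈ (fromEdgeSet c.edgeSet).edgeSet := fun e he ↦ by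
    rw [edgeSet_fromEdgeSet]
    exact ⟨he, G.not_isDiag_of_mem_edgeSet (c.edges_subset_edgeSet he)⟩
  obtain ⟨f⟩ : (cycleGraph (n + 3)).IsContained (fromEdgeSet c.edgeSet) :=
    (cycleGraph_isContained_iff (by lia)).mpr
      ⟨u, c.transfer _ hc', hc.transfer hc', by rw [Walk.length_transfer, hlen]⟩
  let g : Copy (cycleGraph (n + 3)) G := (Copy.ofLE _ _ hle).comp f
  refine ⟨g.toSubgraph, ⟨g.isoToSubgraph.symm⟩, ?_⟩
  refine Set.eq_of_subset_of_ncard_le ?_ ?_ (Set.finite_of_ncard_ne_zero ?_)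
  · rw [Copy.toSubgraph, Subgraph.edgeSet_map]
    rintro _ ⟨e, he, rfl⟩
    have := f.toHom.map_mem_edgeSet he
    rw [edgeSet_fromEdgeSet] at this
    exact this.1
  · rw [ncard_edgeSet_of_isTrail hc.isTrail, hlen,
      ncard_edgeSet_of_iso_cycleGraph g.isoToSubgraph.symm]
  · simp [ncard_edgeSet_of_isTrail hc.isTrail, hlen]

theorem image_edgeSet_setOf_iso_cycleGraph (G : SimpleGraph V) (n : ℕ) :
    Subgraph.edgeSet '' {H : G.Subgraph | Nonempty (H.coe ≃g cycleGraph (n + 3))} =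
      cycleEdgeSets G (n + 3) := by
  ext E
  constructor
  · rintro ⟨H, ⟨e⟩, rfl⟩
    exact edgeSet_mem_cycleEdgeSets_of_iso e
  · rintro ⟨u, c, hc, hlen, rfl⟩
    exact exists_subgraph_edgeSet_eq_of_isCycle hc hlen

theorem cycleCount_eq_ncard_cycleEdgeSets (G : SimpleGraph V) (n : ℕ) :
    cycleCount G (n + 3) = (cycleEdgeSets G (n + 3)).ncard := by
  rw [← image_edgeSet_setOf_iso_cycleGraph,
    (injOn_edgeSet_of_iso_cycleGraph G n).ncard_image]
  rfl

theorem cycleCount_le_of_copy [Finite W] {G' : SimpleGraph W} (f : Copy G G') (n : ℕ) :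
    cycleCount G (n + 3) ≤ cycleCount G' (n + 3) := by
  rw [cycleCount_eq_ncard_cycleEdgeSets, cycleCount_eq_ncard_cycleEdgeSets]
  refine Set.ncard_le_ncard_of_injOn (Sym2.map f '' ·) ?_
    (Set.image_injective.mpr (Sym2.map.injective f.injective)).injOn
  rintro _ ⟨u, c, hc, hlen, rfl⟩
  exact ⟨f u, c.map f.toHom, hc.map f.injective, by rw [Walk.length_map, hlen], c.edgeSet_map _⟩

theorem cycleCount_congr [Finite V] [Finite W] {G' : SimpleGraph W} (e : G ≃g G') (n : ℕ) :
    cycleCount G (n + 3) = cycleCount G' (n + 3) :=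
  (cycleCount_le_of_copy e.toCopy n).antisymm (cycleCount_le_of_copy e.symm.toCopy n)

end CycleEdgeSets

/-! ### Cycles through a new edge -/

theorem insert_cancel {α : Type*} {x : α} {s t : Set α} (hs : x ∉ s) (ht : x ∉ t)
    (h : insert x s = insert x t) : s = t :=
  ((Set.insert_subset_insert_iff hs).mp h.subset).antisymm
    ((Set.insert_subset_insert_iff ht).mp h.superset)

section SupEdge

variable {V : Type*} {G : SimpleGraph V} {a b : V}

theorem eq_of_isPath_of_edgeSet_eq {p q : G.Walk a b} (hp : p.IsPath) (hq : q.IsPath)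
    (h : p.edgeSet = q.edgeSet) : p = q := by
  induction p with
  | nil => exact (Walk.isPath_iff_nil.mp hq).eq_nil.symm
  | @cons u v w hadj p ih =>
    cases q with
    | nil => exact absurd p.end_mem_support ((Walk.cons_isPath_iff hadj p).mp hp).2
    | @cons _ v' _ hadj' q =>
      rw [Walk.edgeSet_cons, Walk.edgeSet_cons] at h
      obtain ⟨hp, hup⟩ := (Walk.cons_isPath_iff hadj p).mp hp
      obtain ⟨hq, huq⟩ := (Walk.cons_isPath_iff hadj' q).mp hq
      have notMem {v x : V} {r : G.Walk v w} (hr : u ∉ r.support) : s(u, x) ∉ r.edgeSet :=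
        fun hx ↦ hr (r.fst_mem_support_of_mem_edges hx)
      have hmem : s(u, v) ∈ insert s(u, v') q.edgeSet := h ▸ Set.mem_insert _ _
      obtain rfl : v = v' := Sym2.congr_right.mp (hmem.resolve_right (notMem huq))
      rw [ih hp hq (insert_cancel (notMem hup) (notMem huq) h)]

theorem exists_isPath_of_snd_eq {c : G.Walk a a} (hc : c.IsCycle) (hb : c.snd = b) :
    ∃ p : G.Walk a b, p.IsPath ∧ p.length + 1 = c.length ∧ s(a, b) ∉ p.edges ∧
      insert s(a, b) p.edgeSet = c.edgeSet := by
  cases c with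
  | nil => exact absurd rfl hc.ne_nil
  | cons hadj p =>
    rw [Walk.snd_cons] at hb
    subst hb
    obtain ⟨hp, hmem⟩ := (Walk.cons_isCycle_iff p hadj).mp hc
    exact ⟨p.reverse, hp.reverse, by simp, by simpa using hmem, by
      rw [Walk.edgeSet_reverse, Walk.edgeSet_cons]⟩

theorem exists_isPath_of_mem_edges {u : V} {c : G.Walk u u} (hc : c.IsCycle)
    (hab : s(a, b) ∈ c.edges) :
    ∃ p : G.Walk a b, p.IsPath ∧ p.length + 1 = c.length ∧ s(a, b) ∉ p.edges ∧
      insert s(a, b) p.edgeSet = c.edgeSet := by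
  classical
  have ha := c.fst_mem_support_of_mem_edges hab
  have hedges : (c.rotate a ha).edgeSet = c.edgeSet :=
    Set.ext fun e ↦ (c.rotate_edges a ha).mem_iff
  rw [← hedges, ← c.length_rotate a ha]
  replace hc := hc.rotate ha
  have hb : b ∈ (c.rotate a ha).toSubgraph.neighborSet a := by
    rw [Subgraph.mem_neighborSet, ← Subgraph.mem_edgeSet, Walk.mem_edges_toSubgraph]
    exact ((c.rotate_edges a ha).mem_iff).mpr hab
  rw [hc.neighborSet_toSubgraph_endpoint] at hb
  rcases hb with hb | hb
  · exact exists_isPath_of_snd_eq hc hb.symm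
  · rw [← Walk.length_reverse, ← Walk.edgeSet_reverse]
    exact exists_isPath_of_snd_eq hc.reverse (by rw [Walk.snd_reverse, hb])

theorem cycleEdgeSets_sup_edge (hne : a ≠ b) (hab : ¬G.Adj a b) (k : ℕ) :
    cycleEdgeSets (G ⊔ edge a b) k = cycleEdgeSets G k ∪
      (fun p ↦ insert s(a, b) p.edgeSet) '' {p : G.Walk a b | p.IsPath ∧ p.length + 1 = k} := by
  have mem_edges {u v : V} {p : (G ⊔ edge a b).Walk u v} (hp : s(a, b) ∉ p.edges) :
      ∀ e ∈ p.edges, e ∈ G.edgeSet := fun e he ↦ by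
    have : e ∈ (G ⊔ edge a b).edgeSet := p.edges_subset_edgeSet he
    rw [edgeSet_sup, edgeSet_edge_of_ne hne] at this
    exact this.resolve_right fun h ↦ hp (h ▸ he)
  ext E
  constructor
  · rintro ⟨u, c, hc, rfl, rfl⟩
    by_cases hmem : s(a, b) ∈ c.edges
    · obtain ⟨p, hp, hlen, hp', hE⟩ := exists_isPath_of_mem_edges hc hmem
      refine .inr ⟨p.transfer G (mem_edges hp'), ⟨hp.transfer _, ?_⟩, ?_⟩
      · rw [Walk.length_transfer, hlen]
      · simpa only [Walk.edgeSet_transfer] using hE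
    · exact .inl ⟨u, c.transfer G (mem_edges hmem), hc.transfer _, c.length_transfer _,
        c.edgeSet_transfer _⟩
  · rintro (⟨u, c, hc, rfl, rfl⟩ | ⟨p, ⟨hp, rfl⟩, rfl⟩)
    · exact ⟨u, c.mapLe le_sup_left, hc.mapLe _, c.length_map _, c.edgeSet_mapLe_eq_edgeSet _⟩
    · have hadj : (G ⊔ edge a b).Adj b a := .inr (by simp [edge_adj, hne.symm])
      refine ⟨b, .cons hadj (p.mapLe le_sup_left),
        (Walk.cons_isCycle_iff _ _).mpr ⟨hp.mapLe _, ?_⟩, ?_, ?_⟩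
      · rw [Walk.edges_mapLe_eq_edges, Sym2.eq_swap]
        exact fun h ↦ hab (p.edges_subset_edgeSet h)
      · simp
      · rw [Walk.edgeSet_cons, Walk.edgeSet_mapLe_eq_edgeSet, Sym2.eq_swap]

theorem cycleCount_sup_edge [Finite V] (hne : a ≠ b) (hab : ¬G.Adj a b) (n : ℕ) :
    cycleCount (G ⊔ edge a b) (n + 3) =
      cycleCount G (n + 3) + {p : G.Walk a b | p.IsPath ∧ p.length = n + 2}.ncard := by
  have notMem (p : G.Walk a b) : s(a, b) ∉ p.edgeSet := fun h ↦ hab (p.edges_subset_edgeSet h)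
  rw [cycleCount_eq_ncard_cycleEdgeSets, cycleCount_eq_ncard_cycleEdgeSets,
    cycleEdgeSets_sup_edge hne hab, Set.ncard_union_eq, Set.InjOn.ncard_image]
  · simp only [Nat.add_right_cancel_iff]
  · rintro p ⟨hp, -⟩ q ⟨hq, -⟩ h
    exact eq_of_isPath_of_edgeSet_eq hp hq (insert_cancel (notMem p) (notMem q) h)
  · rw [Set.disjoint_left]
    rintro _ ⟨u, c, -, -, rfl⟩ ⟨p, -, hE⟩
    exact hab (c.edges_subset_edgeSet (hE ▸ Set.mem_insert _ _ : s(a, b) ∈ c.edgeSet))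

end SupEdge

section InnerPaths

variable {V : Type*} {G : SimpleGraph V} {n : ℕ} {b v : V}

/-- The paths of length `n` from `v` to `b` whose vertices other than `v` and `b` lie in `F`. -/
def innerPaths (G : SimpleGraph V) (F : Finset V) (n : ℕ) (v b : V) : Set (G.Walk v b) :=
  {p | p.IsPath ∧ p.length = n ∧ ∀ x ∈ p.support, x = v ∨ x = b ∨ x ∈ F}

instance finite_innerPaths [Finite V] (F : Finset V) : Finite (innerPaths G F n v b) := by
  classical
  have := Fintype.ofFinite V
  exact ((Set.toFinite {p : G.Walk v b | p.length = n}).subset fun p hp ↦ hp.2.1).to_subtype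

theorem ncard_innerPaths_one [DecidableRel G.Adj] (F : Finset V) (hvb : v ≠ b) :
    (innerPaths G F 1 v b).ncard = if G.Adj v b then 1 else 0 := by
  split_ifs with h
  · rw [Set.ncard_eq_one]
    refine ⟨.cons h .nil, Set.eq_singleton_iff_unique_mem.mpr ⟨⟨by simp [hvb], rfl, by simp⟩, ?_⟩⟩
    rintro (_ | ⟨hadj, _ | _⟩) ⟨-, hlen, -⟩
    · cases hlen
    · rfl
    · cases hlen
  · have hempty : innerPaths G F 1 v b = ∅ :=
      Set.eq_empty_iff_forall_notMem.mpr fun p hp ↦ h (p.adj_of_length_eq_one hp.2.1)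
    rw [hempty, Set.ncard_empty]

theorem cons_mem_innerPaths_iff [DecidableEq V] {F : Finset V} {w : V} (hvF : v ∉ F) (hbF : b ∉ F)
    (hvb : v ≠ b) (hadj : G.Adj v w) (p : G.Walk w b) :
    .cons hadj p ∈ innerPaths G F (n + 2) v b ↔
      w ∈ F ∧ p ∈ innerPaths G (F.erase w) (n + 1) w b := by
  simp only [innerPaths, Set.mem_ofPred_eq, Walk.cons_isPath_iff, Walk.length_cons,
    Walk.support_cons, List.mem_cons, Finset.mem_erase]
  constructor
  · rintro ⟨⟨hp, hv⟩, hlen, h⟩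
    have hwb : w ≠ b := by
      rintro rfl
      rw [(Walk.isPath_iff_nil.mp hp).eq_nil] at hlen
      cases hlen
    have hwF : w ∈ F := ((h w (.inr p.start_mem_support)).resolve_left hadj.ne').resolve_left hwb
    exact ⟨hwF, hp, by lia, by grind⟩
  · rintro ⟨hw, hp, hlen, h⟩
    grind

theorem ncard_innerPaths_add_two [Finite V] [DecidableEq V] [DecidableRel G.Adj] {F : Finset V}
    (hvF : v ∉ F) (hbF : b ∉ F) (hvb : v ≠ b) (n : ℕ) :
    (innerPaths G F (n + 2) v b).ncard =
      ∑ w ∈ F with G.Adj v w, (innerPaths G (F.erase w) (n + 1) w b).ncard := by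
  let cons (x : Σ w : {w // w ∈ F.filter (G.Adj v)}, innerPaths G (F.erase w) (n + 1) w b) :
      innerPaths G F (n + 2) v b :=
    have hw := Finset.mem_filter.mp x.1.2
    ⟨.cons hw.2 x.2, (cons_mem_innerPaths_iff hvF hbF hvb hw.2 x.2.1).mpr ⟨hw.1, x.2.2⟩⟩
  have hcons : Function.Bijective cons := by
    constructor
    · rintro ⟨⟨w, hw⟩, p, hp⟩ ⟨⟨w', hw'⟩, p', hp'⟩ h
      simp only [cons, Subtype.mk.injEq, Walk.cons.injEq] at h
      obtain ⟨rfl, h⟩ := h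
      obtain rfl := eq_of_heq h
      rfl
    · rintro ⟨p, hp⟩
      cases p with
      | nil => exact absurd rfl hvb
      | cons hadj p =>
        obtain ⟨hw, hp'⟩ := (cons_mem_innerPaths_iff hvF hbF hvb hadj p).mp hp
        exact ⟨⟨⟨_, Finset.mem_filter.mpr ⟨hw, hadj⟩⟩, p, hp'⟩, rfl⟩
  rw [← Finset.sum_coe_sort, ← Nat.card_coe_set_eq, ← Nat.card_eq_of_bijective cons hcons,
    Nat.card_sigma]
  simp only [Nat.card_coe_set_eq]

end InnerPaths

/-! ### Counting paths by bit operations -/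

/-- Equal to `f x`. Since the kernel has to expose a constructor of `x` first, every occurrence of
the argument in the body of `f` is a numeral instead of an unevaluated term. -/
def withNumeral {α : Type} (x : ℕ) (f : ℕ → α) : α :=
  Nat.casesOn x (f 0) fun n ↦ f (n + 1)

theorem withNumeral_eq {α : Type} (x : ℕ) (f : ℕ → α) : withNumeral x f = f x := by
  cases x <;> rfl

/-- The sum of `f i` over the binary digits `i` of `m` that are `1`, for `m < 2 ^ n`. -/
def sumBits (f : ℕ → ℕ) : ℕ → ℕ → ℕ
  | 0, _ => 0
  | _ + 1, 0 => 0
  | n + 1, m + 1 => withNumeral (m + 1).log2 fun w ↦ f w + sumBits f n ((m + 1) % 2 ^ w)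

section BitEncoding

variable {N m M b : ℕ} {S : Finset (Fin N)} {G : SimpleGraph (Fin N)}

/-- The binary digits of `m` are the indicator function of `S`. -/
def IsBitSet (m : ℕ) (S : Finset (Fin N)) : Prop :=
  m < 2 ^ N ∧ ∀ i : Fin N, m.testBit i = true ↔ i ∈ S

/-- The binary digits of `M` are the rows of the adjacency matrix of `G`, one after the other. -/
def IsBitMatrix (M : ℕ) (G : SimpleGraph (Fin N)) : Prop :=
  ∀ u v : Fin N, M.testBit (N * u + v) = true ↔ G.Adj u v

theorem sumBits_eq_sum (f : ℕ → ℕ) {n : ℕ} (hn : n ≤ N) (hmn : m < 2 ^ n)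
    (hm : ∀ i : Fin N, m.testBit i = true ↔ i ∈ S) : sumBits f n m = ∑ i ∈ S, f i := by
  induction n generalizing m S with
  | zero =>
    obtain rfl := Nat.lt_one_iff.mp hmn
    simp_all [sumBits, Finset.eq_empty_of_forall_notMem]
  | succ n ih =>
    cases m with
    | zero => simp_all [sumBits, Finset.eq_empty_of_forall_notMem]
    | succ m =>
      let w := (m + 1).log2
      have hlog : w ≤ n := Nat.lt_succ_iff.mp ((Nat.log2_lt m.succ_ne_zero).mpr hmn)
      have hmod : (m + 1) % 2 ^ w < 2 ^ n :=
        (Nat.mod_lt _ (by positivity)).trans_le (Nat.pow_le_pow_right two_pos hlog)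
      have hwS : ⟨w, by lia⟩ ∈ S := (hm _).mp (Nat.testBit_log2 m.succ_ne_zero)
      rw [sumBits, withNumeral_eq, ← Finset.add_sum_erase S _ hwS, ih (by lia) hmod]
      intro i
      rw [Nat.testBit_mod_two_pow, Bool.and_eq_true, hm, decide_eq_true_iff, Finset.mem_erase,
        Fin.ne_iff_vne]
      refine and_congr_left fun hi ↦ ⟨ne_of_lt, fun hne ↦ lt_of_le_of_ne ?_ hne⟩
      exact (Nat.le_log2 m.succ_ne_zero).mpr (Nat.ge_two_pow_of_testBit ((hm i).mpr hi))

theorem IsBitSet.sumBits_eq (hm : IsBitSet m S) (f : ℕ → ℕ) : sumBits f N m = ∑ i ∈ S, f i :=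
  sumBits_eq_sum f le_rfl hm.1 hm.2

theorem isBitSet_univ : IsBitSet (2 ^ N - 1) (.univ : Finset (Fin N)) :=
  ⟨Nat.sub_lt (by positivity) one_pos, fun i ↦ by simp⟩

theorem IsBitSet.erase (hm : IsBitSet m S) {w : Fin N} (hw : w ∈ S) :
    IsBitSet (m ^^^ 2 ^ w.val) (S.erase w) := by
  refine ⟨Nat.xor_lt_two_pow hm.1 (Nat.pow_lt_pow_right one_lt_two w.2), fun i ↦ ?_⟩
  rw [Nat.testBit_xor, Nat.testBit_two_pow, Finset.mem_erase, ← hm.2]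
  obtain rfl | hne := eq_or_ne i w
  · simp [(hm.2 i).mpr hw]
  · simp [hne, Fin.val_ne_of_ne hne.symm]

/-- Row `v` of the bit matrix `M`, followed by the later rows as higher digits. -/
def bitRow (N M v : ℕ) : ℕ := M >>> (N * v)

theorem IsBitMatrix.row_and [DecidableRel G.Adj] (hM : IsBitMatrix M G) (hm : IsBitSet m S)
    (v : Fin N) : IsBitSet (bitRow N M v &&& m) (S.filter (G.Adj v)) := by
  refine ⟨Nat.and_lt_two_pow _ hm.1, fun w ↦ ?_⟩
  rw [Nat.testBit_and, bitRow, Nat.testBit_shiftRight, Bool.and_eq_true, hM, hm.2,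
    Finset.mem_filter, and_comm]

/-- The bit matrix `M` with the edge `ab` added. -/
def addBitEdge (N M a b : ℕ) : ℕ := M ||| 2 ^ (N * a + b) ||| 2 ^ (N * b + a)

theorem mul_add_val_inj {a b u v : Fin N} : N * a + b = N * u + v ↔ a = u ∧ b = v := by
  rw [Nat.add_comm, Nat.add_comm (N * u), ← Prod.mk_inj, ← finProdFinEquiv.apply_eq_iff_eq,
    Fin.ext_iff, finProdFinEquiv_apply_val, finProdFinEquiv_apply_val]

theorem IsBitMatrix.sup_edge (hM : IsBitMatrix M G) {a b : Fin N} (hab : a ≠ b) :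
    IsBitMatrix (addBitEdge N M a b) (G ⊔ edge a b) := by
  intro u v
  simp only [addBitEdge, Nat.testBit_or, Nat.testBit_two_pow, Bool.or_eq_true, hM u v,
    decide_eq_true_eq, mul_add_val_inj, sup_adj, edge_adj]
  grind

/-- `bitPathCount N M b n v m` is the number of paths of length `n + 2` from `v` to `b` with inner
vertices in `m`, for a bit matrix `M` and a bit set `m`. -/
def bitPathCount (N M b : ℕ) : ℕ → ℕ → ℕ → ℕ
  | 0, v, m => sumBits (fun _ ↦ 1) N (bitRow N M v &&& (bitRow N M b &&& m))
  | n + 1, v, m => withNumeral m fun m ↦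
      sumBits (fun w ↦ bitPathCount N M b n w (m ^^^ 2 ^ w)) N (bitRow N M v &&& m)

theorem IsBitMatrix.bitPathCount_eq (hM : IsBitMatrix M G) (hm : IsBitSet m S) {v b : Fin N}
    (hv : v ∉ S) (hb : b ∉ S) (hvb : v ≠ b) (n : ℕ) :
    bitPathCount N M b n v m = (innerPaths G S (n + 2) v b).ncard := by
  classical
  rw [ncard_innerPaths_add_two hv hb hvb]
  induction n generalizing v m S with
  | zero =>
    have hone : ∀ w ∈ S.filter (G.Adj v),
        (innerPaths G (S.erase w) (0 + 1) w b).ncard = if G.Adj b w then 1 else 0 := fun w hw ↦ by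
      rw [ncard_innerPaths_one _ (ne_of_mem_of_not_mem (Finset.mem_filter.mp hw).1 hb)]
      simp only [G.adj_comm]
    rw [bitPathCount, (hM.row_and (hM.row_and hm b) v).sumBits_eq, Finset.sum_congr rfl hone,
      Finset.sum_const, Finset.sum_boole, Finset.filter_comm, smul_eq_mul, mul_one, Nat.cast_id]
  | succ n ih =>
    rw [bitPathCount, withNumeral_eq, (hM.row_and hm v).sumBits_eq]
    refine Finset.sum_congr rfl fun w hw ↦ ?_
    obtain ⟨hwS, -⟩ := Finset.mem_filter.mp hw
    have hwb : w ≠ b := ne_of_mem_of_not_mem hwS hb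
    have hb' := Finset.notMem_mono (S.erase_subset w) hb
    rw [ih (hm.erase hwS) (S.notMem_erase w) hb' hwb,
      ncard_innerPaths_add_two (S.notMem_erase w) hb' hwb]

end BitEncoding

/-! ### The search -/

/-- The graph `H` together with the edges listed in `l`. -/
def addEdges {V : Type*} (H : SimpleGraph V) (l : List (V × V)) : SimpleGraph V :=
  H ⊔ fromRel fun u v ↦ (u, v) ∈ l

section AddEdges

variable {V : Type*} (H : SimpleGraph V)

instance [DecidableEq V] [DecidableRel H.Adj] (l : List (V × V)) :
    DecidableRel (addEdges H l).Adj :=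
  inferInstanceAs (DecidableRel (H ⊔ fromRel fun u v ↦ (u, v) ∈ l).Adj)

theorem addEdges_nil : addEdges H [] = H := by
  ext u v
  simp [addEdges]

theorem addEdges_cons (e : V × V) (l : List (V × V)) :
    addEdges H (e :: l) = addEdges (H ⊔ edge e.1 e.2) l := by
  ext u v
  simp only [addEdges, sup_adj, fromRel_adj, edge_adj, List.mem_cons, Prod.ext_iff]
  tauto

theorem addEdges_append (l l' : List (V × V)) :
    addEdges H (l ++ l') = addEdges (addEdges H l) l' := by
  ext u v
  simp only [addEdges, sup_adj, fromRel_adj, List.mem_append]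
  tauto

end AddEdges

/-- Extends the numbers `c` of cycles of lengths `k + 3`, `k + 4`, … in the bit matrix `M` by the
cycles through a new edge `ab`, failing as soon as one of them exceeds `r`. The bit set `m` consists
of the vertices other than `a` and `b`. -/
def addCounts (N r M a b m : ℕ) : ℕ → List ℕ → Option (List ℕ)
  | _, [] => some []
  | k, x :: c => withNumeral (x + bitPathCount N M b k a m) fun y ↦
      bif y.ble r then (addCounts N r M a b m (k + 1) c).map (y :: ·) else none

/-- Adds the edge `e` to a pair consisting of a bit matrix and its cycle counts. Fails if the edge
is already there or if some count exceeds `r` afterwards. -/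
def extend (N r : ℕ) (s : ℕ × List ℕ) (e : Fin N × Fin N) : Option (ℕ × List ℕ) :=
  bif s.1.testBit (N * e.1 + e.2) then none else
    withNumeral (2 ^ N - 1 ^^^ 2 ^ e.1.val ^^^ 2 ^ e.2.val) fun m ↦
      (addCounts N r s.1 e.1 e.2 m 0 s.2).bind fun c ↦
        withNumeral (addBitEdge N s.1 e.1 e.2) fun M ↦ some (M, c)

/-- All sublists of `es` that extend the state `s` to one where every cycle count is `r`. -/
def search (N r : ℕ) : List (Fin N × Fin N) → ℕ × List ℕ → List (List (Fin N × Fin N))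
  | [], s => bif s.2.all (· == r) then [[]] else []
  | e :: es, s => search N r es s ++
    match extend N r s e with
    | none => []
    | some t => (search N r es t).map (e :: ·)

section Search

variable {N r : ℕ} {G H : SimpleGraph (Fin N)} {s t : ℕ × List ℕ}

/-- The state `s` consists of the bit matrix of `G` and the numbers of cycles of lengths
`3, …, N` in `G`. -/
structure IsSearchState (G : SimpleGraph (Fin N)) (s : ℕ × List ℕ) : Prop where
  isBitMatrix : IsBitMatrix s.1 G
  counts_eq : s.2 = (List.range (N - 2)).map fun k ↦ cycleCount G (k + 3)

theorem cycleCount_bot {V : Type*} (n : ℕ) : cycleCount (⊥ : SimpleGraph V) (n + 3) = 0 := by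
  have hempty : cycleEdgeSets (⊥ : SimpleGraph V) (n + 3) = ∅ := by
    refine Set.eq_empty_iff_forall_notMem.mpr ?_
    rintro _ ⟨u, c, hc, -⟩
    exact isAcyclic_bot c hc
  rw [cycleCount_eq_ncard_cycleEdgeSets, hempty, Set.ncard_empty]

theorem isSearchState_bot :
    IsSearchState (⊥ : SimpleGraph (Fin N)) (0, List.replicate (N - 2) 0) where
  isBitMatrix u v := by simp
  counts_eq := by simp [cycleCount_bot]

theorem IsBitMatrix.cycleCount_sup_edge_eq {M m : ℕ} (hM : IsBitMatrix M H) {a b : Fin N}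
    (hne : a ≠ b) (hab : ¬H.Adj a b) (hm : IsBitSet m ((Finset.univ.erase a).erase b)) (k : ℕ) :
    cycleCount (H ⊔ edge a b) (k + 3) = cycleCount H (k + 3) + bitPathCount N M b k a m := by
  rw [cycleCount_sup_edge hne hab, hM.bitPathCount_eq hm (by simp) (by simp) hne]
  congr 2
  ext p
  simp only [innerPaths, Set.mem_ofPred_eq, Finset.mem_erase, Finset.mem_univ]
  have : ∀ x ∈ p.support, x = a ∨ x = b ∨ x ≠ b ∧ x ≠ a ∧ True := by grind
  tauto

theorem addCounts_eq_some_iff (c : ℕ → ℕ) (M a b m k n : ℕ) (l : List ℕ) :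
    addCounts N r M a b m k ((List.range' k n).map c) = some l ↔
      l = (List.range' k n).map (fun j ↦ c j + bitPathCount N M b j a m) ∧ ∀ x ∈ l, x ≤ r := by
  induction n generalizing k l with
  | zero => simp +contextual [addCounts, eq_comm]
  | succ n ih =>
    rw [List.range'_succ, List.map_cons, addCounts, withNumeral_eq]
    simp only [cond_eq_ite, Nat.ble_eq, List.map_cons]
    split_ifs with h
    · rw [Option.map_eq_some_iff]
      simp only [ih]
      constructor
      · rintro ⟨l, ⟨rfl, hl⟩, rfl⟩
        exact ⟨rfl, List.forall_mem_cons.mpr ⟨h, hl⟩⟩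
      · rintro ⟨rfl, hl⟩
        exact ⟨_, ⟨rfl, (List.forall_mem_cons.mp hl).2⟩, rfl⟩
    · simp only [false_iff]
      rintro ⟨rfl, hl⟩
      exact h (List.forall_mem_cons.mp hl).1

theorem IsSearchState.extend_eq_some_iff (hs : IsSearchState H s) {e : Fin N × Fin N}
    (he : e.1 ≠ e.2) :
    extend N r s e = some t ↔ ¬H.Adj e.1 e.2 ∧ t.1 = addBitEdge N s.1 e.1 e.2 ∧
      IsSearchState (H ⊔ edge e.1 e.2) t ∧ ∀ x ∈ t.2, x ≤ r := by
  obtain ⟨hM, hc⟩ := hs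
  by_cases hadj : H.Adj e.1 e.2
  · simp [extend, (hM _ _).mpr hadj, hadj]
  have hbit : s.1.testBit (N * e.1 + e.2) = false := by simpa [hadj] using hM e.1 e.2
  have hm := (isBitSet_univ.erase (Finset.mem_univ e.1)).erase (w := e.2) (by simp [he.symm])
  obtain ⟨M, l⟩ := t
  simp only [extend, hbit, cond_false, withNumeral_eq, hc, List.range_eq_range',
    Option.bind_eq_some_iff, addCounts_eq_some_iff, Option.some_inj, Prod.mk.injEq,
    ← hM.cycleCount_sup_edge_eq he hadj hm]
  rw [← List.range_eq_range']
  constructor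
  · rintro ⟨_, ⟨h1, h2⟩, rfl, rfl⟩
    exact ⟨hadj, rfl, ⟨hM.sup_edge he, h1⟩, h2⟩
  · rintro ⟨-, rfl, hst, hl⟩
    exact ⟨l, ⟨hst.counts_eq, hl⟩, rfl, rfl⟩

theorem IsSearchState.foldlM_extend (hs : IsSearchState H s) {l : List (Fin N × Fin N)}
    (hl : ∀ e ∈ l, e.1 ≠ e.2) (h : l.foldlM (extend N r) s = some t) :
    IsSearchState (addEdges H l) t := by
  induction l generalizing H s with
  | nil =>
    obtain rfl := Option.some_inj.mp h
    rwa [addEdges_nil]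
  | cons e l ih =>
    obtain ⟨hne, hl⟩ := List.forall_mem_cons.mp hl
    obtain ⟨u, hu, h⟩ := Option.bind_eq_some_iff.mp ((List.foldlM_cons ..).symm.trans h)
    rw [addEdges_cons]
    exact ih ((hs.extend_eq_some_iff hne).mp hu).2.2.1 hl h

theorem IsSearchState.exists_extend_eq_some (hs : IsSearchState H s) {e : Fin N × Fin N}
    (hH : ¬H.Adj e.1 e.2) (hle : H ⊔ edge e.1 e.2 ≤ G) (he : e.1 ≠ e.2)
    (hG : ∀ k < N - 2, cycleCount G (k + 3) = r) :
    ∃ t, IsSearchState (H ⊔ edge e.1 e.2) t ∧ extend N r s e = some t := by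
  let t := (addBitEdge N s.1 e.1 e.2,
    (List.range (N - 2)).map fun k ↦ cycleCount (H ⊔ edge e.1 e.2) (k + 3))
  have ht : IsSearchState (H ⊔ edge e.1 e.2) t := ⟨hs.isBitMatrix.sup_edge he, rfl⟩
  refine ⟨t, ht, (hs.extend_eq_some_iff he).mpr ⟨hH, rfl, ht, List.forall_mem_map.mpr ?_⟩⟩
  intro k hk
  rw [← hG k (List.mem_range.mp hk)]
  exact cycleCount_le_of_copy (Copy.ofLE _ _ hle) k

theorem IsSearchState.exists_mem_search (hs : IsSearchState H s) {es : List (Fin N × Fin N)}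
    (hes : ∀ e ∈ es, e.1 ≠ e.2) (hHG : H ≤ G) (hG : G ≤ addEdges H es)
    (hr : ∀ k < N - 2, cycleCount G (k + 3) = r) : ∃ l ∈ search N r es s, G = addEdges H l := by
  induction es generalizing H s with
  | nil =>
    rw [addEdges_nil] at hG
    obtain rfl := le_antisymm hG hHG
    have hall : s.2.all (· == r) = true := by
      rw [hs.counts_eq, List.all_eq_true]
      exact List.forall_mem_map.mpr fun k hk ↦ beq_iff_eq.mpr (hr k (List.mem_range.mp hk))
    exact ⟨[], by simp [search, hall], (addEdges_nil G).symm⟩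
  | cons e es ih =>
    obtain ⟨he, hes⟩ := List.forall_mem_cons.mp hes
    rw [addEdges_cons] at hG
    by_cases hadj : G.Adj e.1 e.2 ∧ ¬H.Adj e.1 e.2
    · have hle : H ⊔ edge e.1 e.2 ≤ G := sup_le hHG ((edge_le_iff _).mpr (.inr hadj.1))
      obtain ⟨t, ht, hst⟩ := hs.exists_extend_eq_some hadj.2 hle he hr
      obtain ⟨l, hl, rfl⟩ := ih ht hes hle hG
      refine ⟨e :: l, ?_, (addEdges_cons H e l).symm⟩
      simp only [search, hst]
      exact List.mem_append_right _ (List.mem_map_of_mem hl)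
    · have hG' : G ≤ addEdges H es := by
        intro u v huv
        have := hG huv
        simp only [addEdges, sup_adj, edge_adj] at this ⊢
        grind [SimpleGraph.adj_comm]
      obtain ⟨l, hl, rfl⟩ := ih hs hes hHG hG'
      exact ⟨l, List.mem_append_left _ hl, rfl⟩

end Search

/-! ### Hamiltonian graphs -/

/-- The edges `{i, i + 1}` of the cycle graph on `n` vertices. -/
def cycleEdges (n : ℕ) [NeZero n] : List (Fin n × Fin n) :=
  (List.finRange n).map fun i ↦ (i, i + 1)

/-- The pairs of vertices at distance at least `d` along the cycle graph on `n` vertices. -/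
def chords (n d : ℕ) : List (Fin n × Fin n) :=
  (List.finRange n ×ˢ List.finRange n).filter fun e ↦
    e.1 < e.2 ∧ d ≤ (e.2 - e.1).val ∧ d ≤ (e.1 - e.2).val

/-- The search state of the cycle graph on `n` vertices with the chords in `l`. Fails if some
intermediate cycle count exceeds `r`. -/
def chordState (n r : ℕ) [NeZero n] (l : List (Fin n × Fin n)) : Option (ℕ × List ℕ) :=
  (cycleEdges n ++ l).foldlM (extend n r) (0, List.replicate (n - 2) 0)

section Chords

variable {n r : ℕ} {l : List (Fin (n + 2) × Fin (n + 2))}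

theorem addEdges_bot_cycleEdges : addEdges ⊥ (cycleEdges (n + 2)) = cycleGraph (n + 2) := by
  ext u v
  simp only [addEdges, cycleEdges, sup_adj, bot_adj, fromRel_adj, List.mem_map,
    List.mem_finRange, true_and, Prod.mk.injEq, exists_eq_left, false_or, cycleGraph_adj,
    sub_eq_iff_eq_add]
  have hne (w : Fin (n + 2)) : w ≠ w + 1 := by simp
  grind

theorem isSearchState_of_chordState_eq_some {s : ℕ × List ℕ} (hl : ∀ e ∈ l, e.1 ≠ e.2)
    (h : chordState (n + 2) r l = some s) :
    IsSearchState (addEdges (cycleGraph (n + 2)) l) s := by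
  rw [← addEdges_bot_cycleEdges, ← addEdges_append]
  refine isSearchState_bot.foldlM_extend (List.forall_mem_append.mpr ⟨?_, hl⟩) h
  simp [cycleEdges]

theorem cycleCount_eq_getD_of_chordState {c : List ℕ} {k : ℕ} (hl : ∀ e ∈ l, e.1 ≠ e.2)
    (hc : (chordState (n + 2) r l).map Prod.snd = some c) (hk : k < n) :
    cycleCount (addEdges (cycleGraph (n + 2)) l) (k + 3) = c.getD k 0 := by
  obtain ⟨s, hs, rfl⟩ := Option.map_eq_some_iff.mp hc
  rw [(isSearchState_of_chordState_eq_some hl hs).counts_eq]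
  simp [hk]

theorem ne_of_mem_chords {d : ℕ} {e : Fin n × Fin n} (he : e ∈ chords n d) : e.1 ≠ e.2 :=
  (of_decide_eq_true (List.mem_filter.mp he).2).1.ne

theorem exists_mem_chordSearch {G : SimpleGraph (Fin (n + 2))} {d : Fin (n + 2)}
    {L : List (List (Fin (n + 2) × Fin (n + 2)))} (hd : d ≠ 0)
    (hL : (chordState (n + 2) r [(0, d)]).map (search (n + 2) r (chords (n + 2) d)) = some L)
    (hle : cycleGraph (n + 2) ⊔ edge 0 d ≤ G)
    (hG : G ≤ addEdges (cycleGraph (n + 2)) (chords (n + 2) d))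
    (hr : ∀ k < n, cycleCount G (k + 3) = r) :
    ∃ l ∈ L, G = addEdges (cycleGraph (n + 2)) ((0, d) :: l) := by
  obtain ⟨s, hs, rfl⟩ := Option.map_eq_some_iff.mp hL
  have hst := isSearchState_of_chordState_eq_some (by simpa using hd.symm) hs
  simp only [addEdges_cons, addEdges_nil] at hst ⊢
  exact hst.exists_mem_search (fun _ ↦ ne_of_mem_chords) hle
    (hG.trans (sup_le_sup_right le_sup_left _)) hr

theorem exists_iso_cycleGraph_le {V : Type*} [Fintype V] {G : SimpleGraph V}
    (hn : Fintype.card V = n) (h : cycleCount G n ≠ 0) :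
    ∃ G' : SimpleGraph (Fin n), Nonempty (G ≃g G') ∧ cycleGraph n ≤ G' := by
  obtain ⟨H, ⟨e⟩⟩ := Set.nonempty_of_ncard_ne_zero h
  let f : Copy (cycleGraph n) G := H.coeCopy.comp e.symm.toCopy
  have hf : Function.Bijective f := f.injective.bijective_of_nat_card_le (by simp [hn])
  let σ : Fin n ≃ V := .ofBijective f hf
  exact ⟨G.comap σ, ⟨(Iso.comap σ G).symm⟩, fun _ _ huv ↦ f.toHom.map_adj huv⟩

theorem cycleGraph_adj_add_left (x u v : Fin (n + 2)) :
    (cycleGraph (n + 2)).Adj (x + u) (x + v) ↔ (cycleGraph (n + 2)).Adj u v := by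
  simp only [cycleGraph_adj, add_sub_add_left_eq_sub]

theorem le_addEdges_chords {G : SimpleGraph (Fin (n + 2))} {d : ℕ}
    (hG : ∀ u v, G.Adj u v → ¬(cycleGraph (n + 2)).Adj u v → d ≤ (v - u).val) :
    G ≤ addEdges (cycleGraph (n + 2)) (chords (n + 2) d) := by
  intro u v huv
  by_cases hC : (cycleGraph (n + 2)).Adj u v
  · exact .inl hC
  have hle := hG u v huv hC
  have hle' := hG v u huv.symm fun h ↦ hC h.symm
  refine .inr ((fromRel_adj _ _ _).mpr ⟨huv.ne, ?_⟩)
  simpa [chords, hle, hle'] using huv.ne.lt_or_gt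

theorem exists_shortest_chord {G : SimpleGraph (Fin (n + 2))} (hG : cycleGraph (n + 2) < G) :
    ∃ x y, G.Adj x y ∧ ¬(cycleGraph (n + 2)).Adj x y ∧
      ∀ u v, G.Adj u v → ¬(cycleGraph (n + 2)).Adj u v → (y - x).val ≤ (v - u).val := by
  let S := {e : Fin (n + 2) × Fin (n + 2) | G.Adj e.1 e.2 ∧ ¬(cycleGraph (n + 2)).Adj e.1 e.2}
  have hS : S.Nonempty := by
    by_contra! hS
    refine hG.not_ge fun u v huv ↦ ?_
    by_contra hC
    exact hS.subset (show (u, v) ∈ S from ⟨huv, hC⟩)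
  obtain ⟨⟨x, y⟩, ⟨hxy, hC⟩, hmin⟩ := S.exists_min_image (fun e ↦ (e.2 - e.1).val) S.toFinite hS
  exact ⟨x, y, hxy, hC, fun u v huv hC' ↦ hmin (u, v) ⟨huv, hC'⟩⟩

theorem exists_iso_of_cycleGraph_lt {G : SimpleGraph (Fin (n + 2))} (hG : cycleGraph (n + 2) < G) :
    ∃ d : Fin (n + 2), 2 ≤ d.val ∧ 2 * d.val ≤ n + 2 ∧ ∃ G' : SimpleGraph (Fin (n + 2)),
      Nonempty (G ≃g G') ∧ cycleGraph (n + 2) ⊔ edge 0 d ≤ G' ∧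
        G' ≤ addEdges (cycleGraph (n + 2)) (chords (n + 2) d) := by
  obtain ⟨x, y, hxy, hC, hmin⟩ := exists_shortest_chord hG
  have h0 : y - x ≠ 0 := sub_ne_zero.mpr hxy.ne'
  refine ⟨y - x, ?_, ?_, G.comap (Equiv.addLeft x), ⟨(Iso.comap _ G).symm⟩, ?_, ?_⟩
  · have h1 : y - x ≠ 1 := fun h ↦ hC (cycleGraph_adj.mpr (.inr h))
    simp only [ne_eq, Fin.ext_iff, Fin.val_zero, Fin.val_one] at h0 h1
    lia
  · have hneg := Fin.val_neg (y - x)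
    rw [neg_sub, if_neg h0] at hneg
    have hle := hmin y x hxy.symm fun h ↦ hC h.symm
    lia
  · have hle : cycleGraph (n + 2) ≤ G.comap (Equiv.addLeft x) := fun u v huv ↦
      hG.le ((cycleGraph_adj_add_left x u v).mpr huv)
    refine sup_le hle ((edge_le_iff _).mpr (.inr ?_))
    simpa using hxy
  · refine le_addEdges_chords fun u v huv hC' ↦ ?_
    rw [← add_sub_add_left_eq_sub v u x]
    exact hmin _ _ huv ((cycleGraph_adj_add_left x u v).not.mpr hC')

theorem IsRPancyclic.exists_iso_le_addEdges_chords {V : Type*} [Fintype V] {G : SimpleGraph V}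
    (hG : IsRPancyclic G r) (hn : Fintype.card V = n + 2) (hr : r ≠ 0)
    (h3 : cycleCount (cycleGraph (n + 2)) 3 ≠ r) :
    ∃ d : Fin (n + 2), 2 ≤ d.val ∧ 2 * d.val ≤ n + 2 ∧ ∃ G' : SimpleGraph (Fin (n + 2)),
      Nonempty (G ≃g G') ∧ cycleGraph (n + 2) ⊔ edge 0 d ≤ G' ∧
        G' ≤ addEdges (cycleGraph (n + 2)) (chords (n + 2) d) ∧
          ∀ k < n, cycleCount G' (k + 3) = r := by
  have hcount : ∀ k < n, cycleCount G (k + 3) = r := fun k hk ↦ hG.2 _ (by lia) (by lia)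
  have hV := hG.1
  obtain ⟨G₁, ⟨e₁⟩, hle⟩ := exists_iso_cycleGraph_le hn
    (by rwa [hG.2 _ (hn ▸ hV) hn.ge])
  have := Finite.of_fintype V
  have hne : cycleGraph (n + 2) ≠ G₁ := by
    rintro rfl
    exact h3 ((cycleCount_congr e₁ 0).symm.trans (hcount 0 (by lia)))
  obtain ⟨d, h2d, hdn, G₂, ⟨e₂⟩, hG₂, hG₂'⟩ := exists_iso_of_cycleGraph_lt (hle.lt_of_ne hne)
  refine ⟨d, h2d, hdn, G₂, ⟨e₁.trans e₂⟩, hG₂, hG₂', fun k hk ↦ ?_⟩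
  rw [← hcount k hk, cycleCount_congr (e₁.trans e₂)]

end Chords

/-! ### Order 11 -/

/-- The lists of chords that complete the cycle graph on 11 vertices and its chord `{0, 2}` to a
(2)-pancyclic graph. -/
def chordCompletions : List (List (Fin 11 × Fin 11)) :=
  [[(2, 10), (5, 9), (6, 10)], [(2, 10), (4, 8), (5, 9)], [(2, 10), (3, 7), (4, 8)],
    [(2, 6), (2, 10), (3, 7)], [(0, 3), (5, 9), (6, 10)], [(0, 3), (4, 8), (5, 9)],
    [(0, 3), (3, 7), (4, 8)], [(0, 3), (0, 7), (6, 10)]]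

set_option maxRecDepth 10000 in
theorem chordSearch_two :
    (chordState 11 2 [(0, 2)]).map (search 11 2 (chords 11 2)) = some chordCompletions := by
  decide +kernel

set_option maxRecDepth 10000 in
theorem chordSearch_eq_nil : ∀ d ∈ [3, 4, 5],
    (chordState 11 2 [(0, d)]).map (search 11 2 (chords 11 d)) = some [] := by
  decide +kernel

theorem cycleCount_cycleGraph_eleven_three : cycleCount (cycleGraph 11) 3 = 0 := by
  have hcounts : (chordState 11 2 []).map Prod.snd = some [0, 0, 0, 0, 0, 0, 0, 0, 1] := by
    decide +kernel
  have h := cycleCount_eq_getD_of_chordState (n := 9) (k := 0) (by simp) hcounts (by simp)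
  rwa [addEdges_nil] at h

/-- The chords of the four (2)-pancyclic graphs on 11 vertices, drawn around the cycle graph. -/
def twoPancyclicChords : Fin 4 → List (Fin 11 × Fin 11) :=
  ![[(0, 2), (0, 3), (0, 7), (6, 10)], [(0, 2), (0, 3), (3, 7), (4, 8)],
    [(0, 2), (0, 3), (4, 8), (5, 9)], [(0, 2), (0, 3), (5, 9), (6, 10)]]

/-- The four (2)-pancyclic graphs on 11 vertices. -/
def twoPancyclicGraph (i : Fin 4) : SimpleGraph (Fin 11) :=
  addEdges (cycleGraph 11) (twoPancyclicChords i)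

instance (i : Fin 4) : DecidableRel (twoPancyclicGraph i).Adj :=
  inferInstanceAs (DecidableRel (addEdges (cycleGraph 11) _).Adj)

theorem isRPancyclic_twoPancyclicGraph (i : Fin 4) : IsRPancyclic (twoPancyclicGraph i) 2 := by
  have hne : ∀ i, ∀ e ∈ twoPancyclicChords i, e.1 ≠ e.2 := by decide +kernel
  have hcounts : ∀ i, (chordState 11 2 (twoPancyclicChords i)).map Prod.snd =
      some (List.replicate 9 2) := by
    decide +kernel
  refine ⟨by simp, fun k hk hk' ↦ ?_⟩
  rw [Fintype.card_fin] at hk'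
  obtain ⟨k, rfl⟩ := Nat.exists_eq_add_of_le' hk
  have hk9 : k < 9 := by lia
  exact (cycleCount_eq_getD_of_chordState (hne i) (hcounts i) hk9).trans
    (List.getD_replicate _ hk9)

theorem ncard_edgeSet_twoPancyclicGraph (i : Fin 4) :
    (twoPancyclicGraph i).edgeSet.ncard = 15 := by
  rw [← coe_edgeFinset, Set.ncard_coe_finset]
  revert i
  decide +kernel

/-- The number of ordered pairs of adjacent vertices with degrees `a` and `b`. -/
def degreePairCount {V : Type*} [Fintype V] (G : SimpleGraph V) [DecidableRel G.Adj] (a b : ℕ) :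
    ℕ :=
  Fintype.card {p : V × V // G.Adj p.1 p.2 ∧ G.degree p.1 = a ∧ G.degree p.2 = b}

theorem degreePairCount_congr {V W : Type*} [Fintype V] [Fintype W] {G : SimpleGraph V}
    {G' : SimpleGraph W} [DecidableRel G.Adj] [DecidableRel G'.Adj] (e : G ≃g G') (a b : ℕ) :
    degreePairCount G a b = degreePairCount G' a b := by
  refine Fintype.card_congr ((e.toEquiv.prodCongr e.toEquiv).subtypeEquiv fun p ↦ ?_)
  change _ ↔ G'.Adj (e p.1) (e p.2) ∧ G'.degree (e p.1) = a ∧ G'.degree (e p.2) = b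
  simp only [e.map_adj_iff, e.degree_eq]

theorem isEmpty_iso_twoPancyclicGraph {i j : Fin 4} (hij : i ≠ j) :
    IsEmpty (twoPancyclicGraph i ≃g twoPancyclicGraph j) := by
  have hinj : ∀ i j, degreePairCount (twoPancyclicGraph i) 3 4 =
      degreePairCount (twoPancyclicGraph j) 3 4 → i = j := by
    decide +kernel
  exact ⟨fun e ↦ hij (hinj i j (degreePairCount_congr e 3 4))⟩

theorem exists_iso_twoPancyclicGraph_of_mem {l : List (Fin 11 × Fin 11)}
    (hl : l ∈ chordCompletions) :
    ∃ i, Nonempty (addEdges (cycleGraph 11) ((0, 2) :: l) ≃g twoPancyclicGraph i) := by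
  suffices ∃ i, ∃ σ ∈ [Equiv.refl (Fin 11), Equiv.subLeft 2], ∀ u v,
      (twoPancyclicGraph i).Adj (σ u) (σ v) ↔ (addEdges (cycleGraph 11) ((0, 2) :: l)).Adj u v by
    obtain ⟨i, σ, -, hσ⟩ := this
    exact ⟨i, ⟨σ, hσ _ _⟩⟩
  revert l
  decide +kernel

theorem IsRPancyclic.exists_iso_twoPancyclicGraph {V : Type*} [Fintype V] {G : SimpleGraph V}
    (hG : IsRPancyclic G 2) (hV : Fintype.card V = 11) :
    ∃ i, Nonempty (G ≃g twoPancyclicGraph i) := by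
  obtain ⟨d, h2d, hd, G', ⟨e⟩, hle, hle', hcount⟩ :=
    hG.exists_iso_le_addEdges_chords (n := 9) hV two_ne_zero
      (by simp [cycleCount_cycleGraph_eleven_three])
  have hd0 : d ≠ 0 := by
    rintro rfl
    cases h2d
  have hcases : ∀ d : Fin 11, 2 ≤ d.val → 2 * d.val ≤ 11 → d = 2 ∨ d ∈ [3, 4, 5] := by decide
  obtain rfl | hd' := hcases d h2d hd
  · obtain ⟨l, hl, rfl⟩ := exists_mem_chordSearch hd0 chordSearch_two hle hle' hcount
    obtain ⟨i, ⟨e'⟩⟩ := exists_iso_twoPancyclicGraph_of_mem hl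
    exact ⟨i, ⟨e.trans e'⟩⟩
  · obtain ⟨l, hl, -⟩ := exists_mem_chordSearch hd0 (chordSearch_eq_nil d hd') hle hle' hcount
    exact absurd hl List.not_mem_nil

theorem two_pancyclic_count_order_11_general :
    ∃ Gs : Fin 4 → SimpleGraph (Fin 11),
      (∀ i j, i ≠ j → IsEmpty (Gs i ≃g Gs j)) ∧
      (∀ i, IsRPancyclic (Gs i) 2 ∧ (Gs i).edgeSet.ncard = 15) ∧
      ∀ (W : Type*) [Fintype W] (G : SimpleGraph W), Fintype.card W = 11 → IsRPancyclic G 2 →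
        ∃ i, Nonempty (G ≃g Gs i) :=
  ⟨twoPancyclicGraph, fun _ _ ↦ isEmpty_iso_twoPancyclicGraph,
    fun i ↦ ⟨isRPancyclic_twoPancyclicGraph i, ncard_edgeSet_twoPancyclicGraph i⟩,
    fun _ _ _ hW hG ↦ hG.exists_iso_twoPancyclicGraph hW⟩

theorem two_pancyclic_count_order_11 : ExactlyNUpToIso 2 4 11 16 := by
  obtain ⟨Gs, hne, hGs, hall⟩ := two_pancyclic_count_order_11_general
  exact ⟨Gs, hne, fun i ↦ ⟨(hGs i).1, (hGs i).2.trans_le (by simp)⟩, fun W _ G hW _ ↦ hall W G hW⟩
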